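/- Let G be a finite simple undirected graph on n ≥ 4 vertices with no isolated vertices, let r be the number of vertices of G of degree 1 and p the number of vertices of degree n − 1. If G is an equimatchable split graph, then at least one of the following holds: (i) p = n; (ii) r = n − 1 and p = 1; (iii) p = 1, r ≥ 2, n − r is even, and every vertex has degree 1, n − r − 1, or n − 1; (iv) p = 0, r ≥ 2, n − r is even, and there exist non-adjacent vertices x and y with d(x) = n − 2 and d(y) = n − r − 2 such that every vertex other than x and y has degree 1 or n − r − 1; (v) n is odd and there exist two vertices x and y with d(x) + d(y) = p + n − 2 such that every vertex other than x and y has degree n − 1 or n − 2. -/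

import Mathlib

open Finset

variable {V : Type*}

/-- A matching of `G`: a set of edges of `G` that are pairwise disjoint. -/
def IsMatching (G : SimpleGraph V) (M : Finset (Sym2 V)) : Prop :=
  (↑M : Set (Sym2 V)) ⊆ G.edgeSet ∧
    ∀ e ∈ M, ∀ f ∈ M, e ≠ f → ∀ v : V, v ∈ e → v ∉ f

/-- A maximal matching of `G`: a matching such that every edge of `G` shares an
endpoint with some edge of the matching. -/
def IsMaximalMatching (G : SimpleGraph V) (M : Finset (Sym2 V)) : Prop :=
  IsMatching G M ∧ ∀ e ∈ G.edgeSet, ∃ f ∈ M, ∃ v : V, v ∈ e ∧ v ∈ f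

/-- `G` is equimatchable if all maximal matchings have the same cardinality. -/
def Equimatchable (G : SimpleGraph V) : Prop :=
  ∀ M₁ M₂ : Finset (Sym2 V), IsMaximalMatching G M₁ → IsMaximalMatching G M₂ →
    M₁.card = M₂.card

/-- An independent set: a set of pairwise non-adjacent vertices. -/
def IsIndepSet (G : SimpleGraph V) (s : Set V) : Prop :=
  s.Pairwise fun a b => ¬ G.Adj a b

/-- A split graph: the vertex set can be partitioned into a clique and an
independent set. -/
def IsSplitGraph (G : SimpleGraph V) : Prop :=
  ∃ K I : Set V, Disjoint K I ∧ K ∪ I = Set.univ ∧ G.IsClique K ∧ IsIndepSet G I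

def Cov (G : SimpleGraph V) (S : Finset V) : Prop :=
  ∃ M : Finset (Sym2 V), IsMatching G M ∧ (∀ v, (∃ e ∈ M, v ∈ e) ↔ v ∈ S) ∧ 2 * M.card = S.card

theorem cov_empty (G : SimpleGraph V) : Cov G ∅ :=
  ⟨∅, by simp [IsMatching], by simp, by simp⟩

theorem cov_insert [DecidableEq V] (G : SimpleGraph V) {S : Finset V} {a b : V}
    (h : Cov G S) (hab : G.Adj a b) (ha : a ∉ S) (hb : b ∉ S) :
    Cov G (insert a (insert b S)) := by
  obtain ⟨M, ⟨h1, h2⟩, h3, h4⟩ := h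
  have hne : a ≠ b := hab.ne
  have hnot : ∀ e ∈ M, a ∉ e ∧ b ∉ e := by
    intro e he
    exact ⟨fun h => ha ((h3 a).1 ⟨e, he, h⟩), fun h => hb ((h3 b).1 ⟨e, he, h⟩)⟩
  have hnm : s(a, b) ∉ M := fun h => (hnot _ h).1 (by simp)
  refine ⟨insert s(a, b) M, ⟨?_, ?_⟩, ?_, ?_⟩
  · intro e he
    simp only [coe_insert, Set.mem_insert_iff, mem_coe] at he
    rcases he with rfl | he
    · exact hab
    · exact h1 he
  · intro e he f hf hef v hve hvf
    rw [mem_insert] at he hf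
    rcases he with rfl | he <;> rcases hf with rfl | hf
    · exact hef rfl
    · rw [Sym2.mem_iff] at hve
      rcases hve with rfl | rfl
      · exact (hnot f hf).1 hvf
      · exact (hnot f hf).2 hvf
    · rw [Sym2.mem_iff] at hvf
      rcases hvf with rfl | rfl
      · exact (hnot e he).1 hve
      · exact (hnot e he).2 hve
    · exact h2 e he f hf hef v hve hvf
  · intro v
    have := h3 v
    simp only [mem_insert, exists_eq_or_imp, Sym2.mem_iff, this, or_assoc]
  · rw [card_insert_of_notMem hnm, card_insert_of_notMem (by simp [hne, ha]),
      card_insert_of_notMem hb]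
    omega

theorem cov_union [DecidableEq V] (G : SimpleGraph V) {S : Finset V} (h : Cov G S) (k : ℕ) :
    ∀ T : Finset V, T.card = 2 * k → G.IsClique (T : Set V) → Disjoint S T → Cov G (S ∪ T) := by
  induction k with
  | zero =>
    intro T hT _ _
    have : T = ∅ := by simpa using hT
    simpa [this] using h
  | succ k ih =>
    intro T hT hc hd
    obtain ⟨a, ha⟩ : T.Nonempty := by rw [← card_pos]; omega
    have c1 := card_erase_of_mem ha
    obtain ⟨b, hb⟩ : (T.erase a).Nonempty := by rw [← card_pos]; omega
    have c2 := card_erase_of_mem hb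
    have hbT : b ∈ T := mem_of_mem_erase hb
    have hba : b ≠ a := ne_of_mem_erase hb
    have sub : (T.erase a).erase b ⊆ T := (erase_subset _ _).trans (erase_subset _ _)
    have := ih ((T.erase a).erase b) (by omega) (hc.subset (by exact_mod_cast sub))
      (hd.mono_right sub)
    have haS := disjoint_right.1 hd ha
    have hbS := disjoint_right.1 hd hbT
    have h2 := cov_insert G this (hc ha hbT hba.symm) (by simp [haS]) (by simp [hbS])
    convert h2 using 1
    ext v
    simp only [mem_union, mem_insert, mem_erase]
    by_cases va : v = a
    · subst va; simp [ha]
    · by_cases vb : v = b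
      · subst vb; simp [hbT]
      · simp [va, vb]

theorem equi_card (G : SimpleGraph V) (hE : Equimatchable G) {S T : Finset V}
    (hS : Cov G S) (hT : Cov G T) (iS : ∀ a b, a ∉ S → b ∉ S → ¬ G.Adj a b)
    (iT : ∀ a b, a ∉ T → b ∉ T → ¬ G.Adj a b) : S.card = T.card := by
  have key : ∀ (S : Finset V) (M : Finset (Sym2 V)), IsMatching G M →
      (∀ v, (∃ e ∈ M, v ∈ e) ↔ v ∈ S) → (∀ a b, a ∉ S → b ∉ S → ¬ G.Adj a b) →
      IsMaximalMatching G M := by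
    intro S M h1 h2 h3
    refine ⟨h1, ?_⟩
    intro e
    induction e using Sym2.ind with
    | _ a b =>
    intro hab
    by_cases ha : a ∈ S
    · obtain ⟨f, hf, haf⟩ := (h2 a).2 ha
      exact ⟨f, hf, a, by simp, haf⟩
    · by_cases hb : b ∈ S
      · obtain ⟨f, hf, haf⟩ := (h2 b).2 hb
        exact ⟨f, hf, b, by simp, haf⟩
      · exact absurd hab (h3 a b ha hb)
  obtain ⟨M, m1, m2, m3⟩ := hS
  obtain ⟨N, n1, n2, n3⟩ := hT
  have := hE M N (key _ _ m1 m2 iS) (key _ _ n1 n2 iT)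
  omega

def Concl [Fintype V] (G : SimpleGraph V) [DecidableRel G.Adj] (n r p : ℕ) : Prop :=
      p = n ∨
      (r = n - 1 ∧ p = 1) ∨
      (p = 1 ∧ 2 ≤ r ∧ Even (n - r) ∧
        ∀ v : V, G.degree v = 1 ∨ G.degree v = n - r - 1 ∨ G.degree v = n - 1) ∨
      (p = 0 ∧ 2 ≤ r ∧ Even (n - r) ∧
        ∃ x y : V, x ≠ y ∧ ¬ G.Adj x y ∧
          G.degree x = n - 2 ∧ G.degree y = n - r - 2 ∧
          ∀ v : V, v ≠ x → v ≠ y → (G.degree v = 1 ∨ G.degree v = n - r - 1)) ∨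
      (Odd n ∧ ∃ x y : V, x ≠ y ∧ G.degree x + G.degree y = p + n - 2 ∧
        ∀ v : V, v ≠ x → v ≠ y → (G.degree v = n - 1 ∨ G.degree v = n - 2))

section
variable [Fintype V] [DecidableEq V] (G : SimpleGraph V) [DecidableRel G.Adj]

theorem deg_eq {v : V} {S : Finset V} (h : ∀ w, G.Adj v w ↔ w ∈ S) : G.degree v = S.card := by
  rw [← G.card_neighborFinset_eq_degree]
  congr 1
  ext w
  simp [h]

theorem concl_complete (n : ℕ) (hn : Fintype.card V = n) (r p : ℕ)
    (hp : p = (Finset.univ.filter fun v : V => G.degree v = n - 1).card)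
    (h : ∀ a b, a ≠ b → G.Adj a b) : Concl G n r p := by
  left
  rw [hp, filter_true_of_mem, card_univ, hn]
  intro v _
  rw [deg_eq G (S := univ.erase v), card_erase_of_mem (mem_univ _), card_univ, hn]
  intro w
  simp only [mem_erase, mem_univ, and_true]
  exact ⟨fun h => h.ne', fun hw => h _ _ hw.symm⟩

theorem concl_pendant (n : ℕ) (hn : Fintype.card V = n) (hn4 : 4 ≤ n) (r p : ℕ)
    (hr : r = (Finset.univ.filter fun v : V => G.degree v = 1).card)
    (hp : p = (Finset.univ.filter fun v : V => G.degree v = n - 1).card)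
    (C : Finset V) (hC : G.IsClique (C : Set V)) (hev : Even C.card) (x : V)
    (hx : x ∈ C) (hout : ∀ v, v ∉ C → ∀ w, G.Adj v w ↔ w = x) : Concl G n r p := by
  have hcc : C.card + Cᶜ.card = n := by rw [card_add_card_compl, hn]
  have dout : ∀ v, v ∉ C → G.degree v = 1 := by
    intro v hv
    rw [deg_eq G (S := {x})]
    · simp
    · simpa using hout v hv
  have dx : G.degree x = n - 1 := by
    rw [deg_eq G (S := univ.erase x), card_erase_of_mem (mem_univ _), card_univ, hn]
    intro w
    simp only [mem_erase, mem_univ, and_true]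
    refine ⟨fun h => h.ne', fun hw => ?_⟩
    by_cases hwC : w ∈ C
    · exact hC hx hwC hw.symm
    · exact ((hout w hwC x).2 rfl).symm
  have din : ∀ v ∈ C, v ≠ x → G.degree v = C.card - 1 := by
    intro v hv hvx
    rw [deg_eq G (S := C.erase v), card_erase_of_mem hv]
    intro w
    simp only [mem_erase]
    refine ⟨fun h => ⟨h.ne', ?_⟩, fun hw => hC hv hw.2 hw.1.symm⟩
    by_contra hwC
    exact hvx ((hout w hwC v).1 h.symm)
  have hC1 : 0 < C.card := card_pos.2 ⟨x, hx⟩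
  obtain ⟨c, hc⟩ := hev
  rcases Nat.eq_zero_or_pos (Cᶜ.card) with h0 | hs
  · have : C = univ := by simpa using h0
    apply concl_complete G n hn r p hp
    intro a b hab
    exact hC (by simp [this]) (by simp [this]) hab
  have hp1 : p = 1 := by
    rw [hp, card_eq_one]
    refine ⟨x, ?_⟩
    ext v
    simp only [mem_filter, mem_univ, true_and, mem_singleton]
    refine ⟨fun h => ?_, fun h => h ▸ dx⟩
    by_contra hvx
    by_cases hv : v ∈ C
    · have := din v hv hvx; omega
    · have := dout v hv; omega
  by_cases hc2 : c = 1
  · right; left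
    refine ⟨?_, hp1⟩
    rw [hr, ← hn, ← card_univ, ← card_erase_of_mem (mem_univ x)]
    congr 1
    ext v
    simp only [mem_filter, mem_univ, true_and, mem_erase, and_true]
    constructor
    · rintro h rfl; omega
    · intro hvx
      by_cases hv : v ∈ C
      · have := din v hv hvx; omega
      · exact dout v hv
  have hrs : r = Cᶜ.card := by
    rw [hr]; congr 1
    ext v
    simp only [mem_filter, mem_univ, true_and, mem_compl]
    refine ⟨fun h hv => ?_, dout v⟩
    by_cases hvx : v = x
    · subst hvx; omega
    · have := din v hv hvx; omega
  by_cases h1 : Cᶜ.card = 1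
  · right; right; right; right
    obtain ⟨y, hy⟩ := card_eq_one.1 h1
    have hyC : y ∉ C := by rw [← mem_compl, hy]; simp
    obtain ⟨z, hz⟩ : (C.erase x).Nonempty := by
      rw [← card_pos, card_erase_of_mem hx]; omega
    have hzx := ne_of_mem_erase hz
    have hzC := mem_of_mem_erase hz
    have d1 := din z hzC hzx
    have d2 := dout y hyC
    refine ⟨⟨c, by omega⟩, z, y, ?_, by omega, ?_⟩
    · rintro rfl; exact hyC hzC
    · intro v hvz hvy
      by_cases hvx : v = x
      · subst hvx; left; exact dx
      · have : v ∈ C := by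
          by_contra hv
          rw [← mem_compl, hy] at hv; exact hvy (by simpa using hv)
        have := din v this hvx
        right; omega
  · right; right; left
    refine ⟨hp1, by omega, ⟨c, by omega⟩, ?_⟩
    intro v
    by_cases hv : v ∈ C
    · by_cases hvx : v = x
      · subst hvx; right; right; exact dx
      · have := din v hv hvx; right; left; omega
    · left; exact dout v hv

theorem concl_two (n : ℕ) (hn : Fintype.card V = n) (hn4 : 4 ≤ n) (r p : ℕ)
    (hr : r = (Finset.univ.filter fun v : V => G.degree v = 1).card)
    (hp : p = (Finset.univ.filter fun v : V => G.degree v = n - 1).card)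
    (K : Finset V) (hK : G.IsClique (K : Set V)) (k : ℕ) (hk : K.card = 2 * k + 3)
    (x y : V) (hx : x ∈ K) (hy : y ∉ K) (hxy : ¬ G.Adj x y) (hyK : ∀ v ∈ K, v ≠ x → G.Adj v y)
    (hout : ∀ v, v ∉ K → v ≠ y → ∀ w, G.Adj v w ↔ w = x)
    (hyo : ∀ w, w ∉ K → ¬ G.Adj y w) (hxn : ∃ w, w ∉ K ∧ w ≠ y) :
    Concl G n r p := by
  have hCc : (insert y K).card = 2 * k + 4 := by rw [card_insert_of_notMem hy, hk]
  have hcc : (insert y K).card + (insert y K)ᶜ.card = n := by rw [card_add_card_compl, hn]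
  have hs : 0 < (insert y K)ᶜ.card := by
    obtain ⟨w, h1, h2⟩ := hxn
    exact card_pos.2 ⟨w, by simp [h1, h2]⟩
  have hxney : x ≠ y := by rintro rfl; exact hy hx
  have dout : ∀ v, v ∉ K → v ≠ y → G.degree v = 1 := by
    intro v hv hvy
    rw [deg_eq G (S := {x})]
    · simp
    · simpa using hout v hv hvy
  have dx : G.degree x = n - 2 := by
    rw [deg_eq G (S := (univ.erase x).erase y), card_erase_of_mem (by simp [hxney.symm]),
      card_erase_of_mem (mem_univ _), card_univ, hn]
    · omega
    intro w
    simp only [mem_erase, mem_univ, and_true]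
    refine ⟨fun h => ⟨?_, h.ne'⟩, fun hw => ?_⟩
    · rintro rfl; exact hxy h
    by_cases hwC : w ∈ K
    · exact hK hx hwC hw.2.symm
    · exact ((hout w hwC hw.1 x).2 rfl).symm
  have dy : G.degree y = 2 * k + 2 := by
    rw [deg_eq G (S := K.erase x), card_erase_of_mem hx, hk]
    · omega
    intro w
    simp only [mem_erase]
    refine ⟨fun h => ⟨?_, ?_⟩, fun hw => (hyK w hw.2 hw.1).symm⟩
    · rintro rfl; exact hxy h.symm
    · by_contra hw; exact hyo w hw h
  have din : ∀ v ∈ K, v ≠ x → G.degree v = 2 * k + 3 := by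
    intro v hv hvx
    have hvy : v ≠ y := by rintro rfl; exact hy hv
    rw [deg_eq G (S := (insert y K).erase v), card_erase_of_mem (by simp [hv]), hCc]
    · omega
    intro w
    simp only [mem_erase, mem_insert]
    refine ⟨fun h => ⟨h.ne', ?_⟩, fun hw => ?_⟩
    · by_contra hwC
      push Not at hwC
      exact hvx ((hout w hwC.2 hwC.1 v).1 h.symm)
    · rcases hw with ⟨hwv, rfl | hw⟩
      · exact hyK v hv hvx
      · exact hK hv hw hwv.symm
  have hp0 : p = 0 := by
    rw [hp, card_eq_zero, filter_eq_empty_iff]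
    intro v _ h
    by_cases hvx : v = x
    · subst hvx; omega
    by_cases hvy : v = y
    · subst hvy; omega
    by_cases hv : v ∈ K
    · have := din v hv hvx; omega
    · have := dout v hv hvy; omega
  have hrs : r = (insert y K)ᶜ.card := by
    rw [hr]; congr 1
    ext v
    simp only [mem_filter, mem_univ, true_and, mem_compl, mem_insert, not_or]
    refine ⟨fun h => ⟨?_, fun hv => ?_⟩, fun h => dout v h.2 h.1⟩
    · rintro rfl; omega
    by_cases hvx : v = x
    · subst hvx; omega
    · have := din v hv hvx; omega
  by_cases h1 : (insert y K)ᶜ.card = 1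
  · right; right; right; right
    obtain ⟨z, hz⟩ := card_eq_one.1 h1
    have hzC : z ∉ insert y K := by rw [← mem_compl, hz]; simp
    simp only [mem_insert, not_or] at hzC
    have d2 := dout z hzC.2 hzC.1
    refine ⟨⟨k + 2, by omega⟩, y, z, fun h => hzC.1 h.symm, by omega, ?_⟩
    intro v hvy hvz
    right
    by_cases hvx : v = x
    · subst hvx; exact dx
    · have : v ∈ K := by
        by_contra hv
        have h' : v ∈ (insert y K)ᶜ := by simp [hv, hvy]
        rw [hz] at h'; exact hvz (by simpa using h')
      have := din v this hvx
      omega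
  · right; right; right; left
    refine ⟨hp0, by omega, ⟨k + 2, by omega⟩, x, y, hxney, hxy, dx, by omega, ?_⟩
    intro v hvx hvy
    by_cases hv : v ∈ K
    · have := din v hv hvx; right; omega
    · left; exact dout v hv hvy

theorem concl_S (n : ℕ) (hn : Fintype.card V = n) (hn4 : 4 ≤ n) (r p : ℕ)
    (hp : p = (Finset.univ.filter fun v : V => G.degree v = n - 1).card)
    (K : Finset V) (hK : G.IsClique (K : Set V)) (hev : Even K.card) (y : V)
    (hout : ∀ v, v ∉ K ↔ v = y) : Concl G n r p := by
  have hy : y ∉ K := (hout y).2 rfl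
  have hKu : insert y K = univ := by
    ext v; have := hout v; simp only [mem_insert, mem_univ, iff_true]; tauto
  have hKc : K.card + 1 = n := by
    rw [← card_insert_of_notMem hy, hKu, card_univ, hn]
  have hKe : ∀ v, v ≠ y → v ∈ K := fun v hv => by by_contra h; exact hv ((hout v).1 h)
  by_cases hall : ∀ v ∈ K, G.Adj v y
  · apply concl_complete G n hn r p hp
    intro a b hab
    by_cases ha : a = y
    · subst ha; exact (hall b (hKe b hab.symm)).symm
    · by_cases hb : b = y
      · subst hb; exact hall a (hKe a hab)
      · exact hK (hKe a ha) (hKe b hb) hab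
  push Not at hall
  obtain ⟨x, hx, hxy⟩ := hall
  have d1 : ∀ v ∈ K, G.Adj v y → G.degree v = n - 1 := by
    intro v hv hvy
    rw [deg_eq G (S := univ.erase v), card_erase_of_mem (mem_univ _), card_univ, hn]
    intro w
    simp only [mem_erase, mem_univ, and_true]
    refine ⟨fun h => h.ne', fun hw => ?_⟩
    by_cases hwy : w = y
    · subst hwy; exact hvy
    · exact hK hv (hKe w hwy) hw.symm
  have d2 : ∀ v ∈ K, ¬ G.Adj v y → G.degree v = n - 2 := by
    intro v hv hvy
    rw [deg_eq G (S := K.erase v), card_erase_of_mem hv]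
    · omega
    intro w
    simp only [mem_erase]
    refine ⟨fun h => ⟨h.ne', ?_⟩, fun hw => hK hv hw.2 hw.1.symm⟩
    apply hKe
    rintro rfl; exact hvy h
  have hyd : G.degree y = (K.filter fun v => G.Adj v y).card := by
    apply deg_eq G
    intro w
    simp only [mem_filter]
    exact ⟨fun h => ⟨hKe w h.ne', h.symm⟩, fun h => h.2.symm⟩
  have hlt : (K.filter fun v => G.Adj v y).card < K.card := by
    apply card_lt_card
    rw [filter_ssubset]
    exact ⟨x, hx, hxy⟩
  have hpy : p = G.degree y := by
    rw [hyd, hp]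
    congr 1
    ext v
    simp only [mem_filter, mem_univ, true_and]
    constructor
    · intro h
      have hvK : v ∈ K := hKe v (by rintro rfl; omega)
      refine ⟨hvK, ?_⟩
      by_contra h'
      have := d2 v hvK h'; omega
    · intro h; exact d1 v h.1 h.2
  right; right; right; right
  obtain ⟨c, hc⟩ := hev
  have := d2 x hx hxy
  refine ⟨⟨c, by omega⟩, x, y, ?_, by omega, ?_⟩
  · rintro rfl; exact hy hx
  · intro v _ hvy
    by_cases h : G.Adj v y
    · left; exact d1 v (hKe v hvy) h
    · right; exact d2 v (hKe v hvy) h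

theorem concl_T (n : ℕ) (hn : Fintype.card V = n) (hn4 : 4 ≤ n) (r p : ℕ)
    (hp : p = (Finset.univ.filter fun v : V => G.degree v = n - 1).card)
    (K : Finset V) (hK : G.IsClique (K : Set V)) (hodd : Odd K.card) (y z : V)
    (hyz : y ≠ z) (hout : ∀ v, v ∉ K ↔ v = y ∨ v = z) (hI : ¬ G.Adj y z)
    (hKI : ∀ v ∈ K, G.Adj v y ∨ G.Adj v z) : Concl G n r p := by
  have hy : y ∉ K := (hout y).2 (Or.inl rfl)
  have hz : z ∉ K := (hout z).2 (Or.inr rfl)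
  have hKu : insert y (insert z K) = univ := by
    ext v; have := hout v; simp only [mem_insert, mem_univ, iff_true]; tauto
  have hKc : K.card + 2 = n := by
    have := card_insert_of_notMem hz
    have h2 := card_insert_of_notMem (show y ∉ insert z K by simp [hyz, hy])
    rw [hKu, card_univ, hn] at h2; omega
  have hKe : ∀ v, v ≠ y → v ≠ z → v ∈ K := fun v hv hv' => by
    by_contra h; have := (hout v).1 h; tauto
  have hyd : G.degree y = (K.filter fun v => G.Adj v y).card := by
    apply deg_eq G
    intro w
    simp only [mem_filter]
    exact ⟨fun h => ⟨hKe w h.ne' (by rintro rfl; exact hI h), h.symm⟩, fun h => h.2.symm⟩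
  have hzd : G.degree z = (K.filter fun v => G.Adj v z).card := by
    apply deg_eq G
    intro w
    simp only [mem_filter]
    exact ⟨fun h => ⟨hKe w (by rintro rfl; exact hI h.symm) h.ne', h.symm⟩, fun h => h.2.symm⟩
  have d1 : ∀ v ∈ K, G.Adj v y → G.Adj v z → G.degree v = n - 1 := by
    intro v hv hvy hvz
    rw [deg_eq G (S := univ.erase v), card_erase_of_mem (mem_univ _), card_univ, hn]
    intro w
    simp only [mem_erase, mem_univ, and_true]
    refine ⟨fun h => h.ne', fun hw => ?_⟩
    by_cases hwy : w = y
    · subst hwy; exact hvy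
    by_cases hwz : w = z
    · subst hwz; exact hvz
    · exact hK hv (hKe w hwy hwz) hw.symm
  have d2 : ∀ v ∈ K, ¬ (G.Adj v y ∧ G.Adj v z) → G.degree v = n - 2 := by
    intro v hv hvy
    have aux : ∀ a b : V, a ∉ K → (∀ w, w ∉ K → w ≠ a → w = b) → G.Adj v a → ¬ G.Adj v b →
        G.degree v = n - 2 := by
      intro a b ha hb hva hvb
      have : v ≠ a := hva.ne
      rw [deg_eq G (S := insert a (K.erase v)), card_insert_of_notMem (by simp [ha]),
        card_erase_of_mem hv]
      · have := card_pos.2 ⟨v, hv⟩; omega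
      intro w
      simp only [mem_insert, mem_erase]
      constructor
      · intro h
        by_cases hwa : w = a
        · exact Or.inl hwa
        right
        refine ⟨h.ne', ?_⟩
        by_contra hw
        have := hb w hw hwa
        subst this; exact hvb h
      · rintro (rfl | h)
        · exact hva
        · exact hK hv h.2 h.1.symm
    by_cases h : G.Adj v y
    · exact aux y z hy (fun w hw hwa => ((hout w).1 hw).resolve_left hwa) h (fun h' => hvy ⟨h, h'⟩)
    · exact aux z y hz (fun w hw hwa => ((hout w).1 hw).resolve_right hwa)
        ((hKI v hv).resolve_left h) h
  have hle : (K.filter fun v => G.Adj v y).card ≤ K.card := card_filter_le _ _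
  have hle' : (K.filter fun v => G.Adj v z).card ≤ K.card := card_filter_le _ _
  have hpy : p = (K.filter fun v => G.Adj v y ∧ G.Adj v z).card := by
    rw [hp]
    congr 1
    ext v
    simp only [mem_filter, mem_univ, true_and]
    constructor
    · intro h
      have hvK : v ∈ K := hKe v (by rintro rfl; omega) (by rintro rfl; omega)
      refine ⟨hvK, ?_⟩
      by_contra h'
      have := d2 v hvK h'; omega
    · intro h; exact d1 v h.1 h.2.1 h.2.2
  have hsum : G.degree y + G.degree z = K.card + p := by
    rw [hyd, hzd, hpy, ← card_union_add_card_inter, ← filter_or, ← filter_and,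
      filter_true_of_mem hKI]
  right; right; right; right
  obtain ⟨c, hc⟩ := hodd
  refine ⟨⟨c + 1, by omega⟩, y, z, hyz, by omega, ?_⟩
  intro v hvy hvz
  by_cases h : G.Adj v y ∧ G.Adj v z
  · left; exact d1 v (hKe v hvy hvz) h.1 h.2
  · right; exact d2 v (hKe v hvy hvz) h

end

theorem main_aux {V : Type*} [Fintype V] [DecidableEq V]
    (G : SimpleGraph V) [DecidableRel G.Adj]
    (n : ℕ) (hn : Fintype.card V = n) (hn4 : 4 ≤ n)
    (hNoIso : ∀ v : V, ∃ w : V, G.Adj v w)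
    (r p : ℕ)
    (hr : r = (Finset.univ.filter fun v : V => G.degree v = 1).card)
    (hp : p = (Finset.univ.filter fun v : V => G.degree v = n - 1).card)
    (hEq : Equimatchable G) (hSplit : IsSplitGraph G) : Concl G n r p := by
  classical
  obtain ⟨K', I', hd, hu, hK', hI'⟩ := hSplit
  obtain ⟨K, rfl⟩ : ∃ K : Finset V, (K : Set V) = K' := ⟨K'.toFinset, by simp⟩
  have hKadj : ∀ a ∈ K, ∀ b ∈ K, a ≠ b → G.Adj a b := fun a ha b hb h => hK' ha hb h
  have hI : ∀ a b, a ∉ K → b ∉ K → ¬ G.Adj a b := by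
    intro a b ha hb hab
    have mem : ∀ v, v ∉ K → v ∈ I' := by
      intro v hv
      have : v ∈ (K : Set V) ∪ I' := by rw [hu]; trivial
      exact this.resolve_left hv
    exact hI' (mem a ha) (mem b hb) hab.ne hab
  have hIK : ∀ a, a ∉ K → ∃ v ∈ K, G.Adj a v := by
    intro a ha
    obtain ⟨w, hw⟩ := hNoIso a
    refine ⟨w, ?_, hw⟩
    by_contra h
    exact hI a w ha h hw
  clear hd hu hI'
  by_cases hemp : ∀ a, a ∈ K
  · exact concl_complete G n hn r p hp fun a b hab => hKadj a (hemp a) b (hemp b) hab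
  push Not at hemp
  obtain ⟨i0, hi0⟩ := hemp
  obtain ⟨v0, hv0, hiv0⟩ := hIK i0 hi0
  -- coverings
  have indep : ∀ S : Finset V, K ⊆ S → ∀ a b, a ∉ S → b ∉ S → ¬ G.Adj a b :=
    fun S hS a b ha hb => hI a b (fun h => ha (hS h)) (fun h => hb (hS h))
  have ext : ∀ S : Finset V, Cov G S → Even ((K \ S).card) → Cov G (S ∪ K) := by
    intro S hS ⟨c, hc⟩
    have := cov_union G hS c (K \ S) (by omega) (hK'.subset (by simp)) disjoint_sdiff
    simpa using this
  rcases Nat.even_or_odd K.card with hev | hodd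
  · have c0 : Cov G K := by simpa using ext ∅ (cov_empty G) (by simpa using hev)
    have no2 : ∀ a ∈ K, ∀ b ∈ K, ∀ i j, i ∉ K → j ∉ K → a ≠ b → i ≠ j →
        G.Adj i a → G.Adj j b → False := by
      intro a ha b hb i j hi hj hab hij hia hjb
      have hib : i ≠ b := by rintro rfl; exact hi hb
      have hja : j ≠ a := by rintro rfl; exact hj ha
      have c1 := cov_insert G (cov_empty G) hia (by simp) (by simp)
      have c2 := cov_insert G c1 hjb (by simp [hij.symm, hja]) (by simp [hab.symm, hib.symm])
      have e1 : K \ insert j (insert b (insert i (insert a ∅))) = (K.erase a).erase b := by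
        ext v; simp only [mem_sdiff, mem_insert, mem_erase, notMem_empty]; grind
      have k1 := card_erase_of_mem ha
      have hb' : b ∈ K.erase a := by simp [hb, hab.symm]
      have k2 := card_erase_of_mem hb'
      have kp := card_pos.2 ⟨b, hb'⟩
      have e2 : insert j (insert b (insert i (insert a ∅))) ∪ K = insert i (insert j K) := by
        ext v; simp only [mem_union, mem_insert, notMem_empty]; grind
      obtain ⟨c, hc⟩ := hev
      have c3 := ext _ c2 ⟨c - 1, by rw [e1]; omega⟩
      rw [e2] at c3
      have := equi_card G hEq c0 c3 (indep _ (Subset.refl _))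
        (indep _ ((subset_insert _ _).trans (subset_insert _ _)))
      rw [card_insert_of_notMem (by simp [hij, hi]), card_insert_of_notMem hj] at this
      omega
    by_cases hone : ∀ v, v ∉ K → v = i0
    · exact concl_S G n hn hn4 r p hp K hK' hev i0
        fun v => ⟨hone v, by rintro rfl; exact hi0⟩
    push Not at hone
    obtain ⟨i1, hi1, hi10⟩ := hone
    have h1 : ∀ v, v ∉ K → v ≠ i0 → ∀ w, G.Adj v w → w = v0 := by
      intro v hv hvi w hw
      have hwK : w ∈ K := by by_contra h; exact hI _ _ hv h hw
      by_contra hne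
      exact no2 w hwK v0 hv0 v i0 hv hi0 hne hvi hw hiv0
    have h10 : G.Adj i1 v0 := by
      obtain ⟨w, hw⟩ := hNoIso i1
      rwa [h1 i1 hi1 hi10 w hw] at hw
    refine concl_pendant G n hn hn4 r p hr hp K hK' hev v0 hv0 ?_
    intro v hv
    have hu : ∀ w, G.Adj v w → w = v0 := by
      by_cases hvi : v = i0
      · subst hvi
        intro w hw
        have hwK : w ∈ K := by by_contra h; exact hI _ _ hv h hw
        by_contra hne
        exact no2 w hwK v0 hv0 v i1 hv hi1 hne hi10.symm hw h10
      · exact h1 v hv hvi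
    intro w
    refine ⟨hu w, ?_⟩
    rintro rfl
    obtain ⟨w', hw⟩ := hNoIso v
    rwa [hu w' hw] at hw
  · -- odd case
    have cone : ∀ a ∈ K, ∀ i, i ∉ K → G.Adj i a → Cov G (insert i K) := by
      intro a ha i hi hia
      have c1 := cov_insert G (cov_empty G) hia (by simp) (by simp)
      have e1 : K \ insert i (insert a ∅) = K.erase a := by
        ext v; simp only [mem_sdiff, mem_insert, mem_erase, notMem_empty]; grind
      have k1 := card_erase_of_mem ha
      have e2 : insert i (insert a ∅) ∪ K = insert i K := by
        ext v; simp only [mem_union, mem_insert, notMem_empty]; grind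
      obtain ⟨c, hc⟩ := hodd
      have c3 := ext _ c1 ⟨c, by rw [e1]; omega⟩
      rwa [e2] at c3
    have c0 := cone v0 hv0 i0 hi0 hiv0
    have cc0 : (insert i0 K).card = K.card + 1 := card_insert_of_notMem hi0
    have hKI : ∀ v ∈ K, ∃ i, i ∉ K ∧ G.Adj i v := by
      intro v hv
      by_contra hno
      push Not at hno
      have k1 := card_erase_of_mem hv
      obtain ⟨c, hc⟩ := hodd
      have c1 := cov_union G (cov_empty G) c (K.erase v) (by omega)
        (hK'.subset (by simp)) (by simp)
      rw [empty_union] at c1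
      have := equi_card G hEq c0 c1 (indep _ (subset_insert _ _)) (by
        intro a b ha hb hab
        have ha' : a ∉ K ∨ a = v := by by_cases h : a = v <;> simp_all
        have hb' : b ∉ K ∨ b = v := by by_cases h : b = v <;> simp_all
        rcases ha' with ha' | rfl <;> rcases hb' with hb' | rfl
        · exact hI a b ha' hb' hab
        · exact hno a ha' hab
        · exact hno b hb' hab.symm
        · exact G.loopless.irrefl _ hab)
      omega
    have no3 : ∀ a b c i j l, a ∈ K → b ∈ K → c ∈ K → i ∉ K → j ∉ K → l ∉ K →
        a ≠ b → a ≠ c → b ≠ c → i ≠ j → i ≠ l → j ≠ l →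
        G.Adj i a → G.Adj j b → G.Adj l c → False := by
      intro a b c i j l ha hb hc hi hj hl hab hac hbc hij hil hjl hia hjb hlc
      have ne : ∀ u ∈ K, ∀ w, w ∉ K → u ≠ w := by rintro u hu w hw rfl; exact hw hu
      have c1 := cov_insert G (cov_empty G) hia (by simp) (by simp)
      have c2 := cov_insert G c1 hjb (by simp [hij.symm, (ne a ha j hj).symm])
        (by simp [hab.symm, ne b hb i hi])
      have c3 := cov_insert G c2 hlc
        (by simp [hil.symm, hjl.symm, (ne a ha l hl).symm, (ne b hb l hl).symm])
        (by simp [hac.symm, hbc.symm, ne c hc i hi, ne c hc j hj])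
      have e1 : K \ insert l (insert c (insert j (insert b (insert i (insert a ∅))))) =
          ((K.erase a).erase b).erase c := by
        ext v; simp only [mem_sdiff, mem_insert, mem_erase, notMem_empty]; grind
      have k1 := card_erase_of_mem ha
      have hb' : b ∈ K.erase a := by simp [hb, hab.symm]
      have k2 := card_erase_of_mem hb'
      have hc' : c ∈ (K.erase a).erase b := by simp [hc, hac.symm, hbc.symm]
      have k3 := card_erase_of_mem hc'
      have kp := card_pos.2 ⟨c, hc'⟩
      have e2 : insert l (insert c (insert j (insert b (insert i (insert a ∅))))) ∪ K =
          insert i (insert j (insert l K)) := by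
        ext v; simp only [mem_union, mem_insert, notMem_empty]; grind
      obtain ⟨d, hd⟩ := hodd
      have c4 := ext _ c3 ⟨d - 1, by rw [e1]; omega⟩
      rw [e2] at c4
      have := equi_card G hEq c0 c4 (indep _ (subset_insert _ _))
        (indep _ ((subset_insert _ _).trans ((subset_insert _ _).trans (subset_insert _ _))))
      have q1 : i ∉ insert j (insert l K) := by simp [hij, hil, hi]
      have q2 : j ∉ insert l K := by simp [hjl, hj]
      rw [card_insert_of_notMem q1, card_insert_of_notMem q2, card_insert_of_notMem hl] at this
      omega
    -- star-like situation
    have star : ∀ x ∈ K, ∀ y, y ∉ K → (∀ v ∈ K, G.Adj y v) →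
        (∀ v, v ∉ K → v ≠ y → ∀ w, G.Adj v w → w = x) → Concl G n r p := by
      intro x hx y hy hyK hout
      refine concl_pendant G n hn hn4 r p hr hp (insert y K) ?_ ?_ x (by simp [hx]) ?_
      · rw [coe_insert]
        exact hK'.insert fun b hb _ => hyK b hb
      · rw [card_insert_of_notMem hy]; exact hodd.add_one
      · intro v hv w
        simp only [mem_insert, not_or] at hv
        refine ⟨hout v hv.2 hv.1 w, ?_⟩
        rintro rfl
        obtain ⟨w', hw⟩ := hNoIso v
        rwa [hout v hv.2 hv.1 w' hw] at hw
    by_cases hk1 : K.card = 1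
    · obtain ⟨x, hx⟩ := card_eq_one.1 hk1
      have hin : ∀ v, v ∈ K → v = x := by intro v hv; rw [hx] at hv; simpa using hv
      have := hin v0 hv0
      subst this
      refine star v0 hv0 i0 hi0 (fun v hv => by rw [hin v hv]; exact hiv0) ?_
      intro v hv _ w hw
      apply hin
      by_contra h; exact hI _ _ hv h hw
    obtain ⟨k, hk⟩ : ∃ k, K.card = 2 * k + 3 := by
      obtain ⟨c, hc⟩ := hodd; exact ⟨c - 1, by omega⟩
    by_cases hone : ∀ v, v ∉ K → v = i0
    · refine star v0 hv0 i0 hi0 ?_ (fun v hv hv' => absurd (hone v hv) hv')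
      intro v hv
      obtain ⟨i, hi, hiv⟩ := hKI v hv
      rwa [hone i hi] at hiv
    push Not at hone
    obtain ⟨i1, hi1, hi10⟩ := hone
    by_cases htwo : ∀ v, v ∉ K → v = i0 ∨ v = i1
    · refine concl_T G n hn hn4 r p hp K hK' hodd i0 i1 hi10.symm ?_ (hI _ _ hi0 hi1) ?_
      · intro v
        refine ⟨htwo v, ?_⟩
        rintro (rfl | rfl) <;> assumption
      · intro v hv
        obtain ⟨i, hi, hiv⟩ := hKI v hv
        rcases htwo i hi with rfl | rfl
        · exact Or.inl hiv.symm
        · exact Or.inr hiv.symm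
    push Not at htwo
    obtain ⟨i2, hi2, hi20, hi21⟩ := htwo
    have third : ∀ a b : V, ∃ c ∈ K, c ≠ a ∧ c ≠ b := by
      intro a b
      by_contra h
      push Not at h
      have : K ⊆ {a, b} := by
        intro c hc
        by_cases hca : c = a
        · simp [hca]
        · simp [h c hc hca]
      have h1 := card_le_card this
      have h2 : ({a, b} : Finset V).card ≤ 2 := card_le_two
      omega
    have thirdI : ∀ a b : V, ∃ c, c ∉ K ∧ c ≠ a ∧ c ≠ b := by
      intro a b
      by_contra h
      push Not at h
      have g0 := h i0 hi0
      have g1 := h i1 hi1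
      have g2 := h i2 hi2
      by_cases a0 : i0 = a
      · have b1 := g1 (by rw [← a0]; exact hi10)
        have b2 := g2 (by rw [← a0]; exact hi20)
        exact hi21 (b2.trans b1.symm)
      · have b0 := g0 a0
        by_cases a1 : i1 = a
        · have b2 := g2 (by rw [← a1]; exact hi21)
          exact hi20 (b2.trans b0.symm)
        · exact hi10 ((g1 a1).trans b0.symm)
    -- a 2-matching
    obtain ⟨v1, v2, j1, j2, hv1, hv2, hj1, hj2, hv12, hj12, e1, e2⟩ :
        ∃ v1 v2 j1 j2, v1 ∈ K ∧ v2 ∈ K ∧ j1 ∉ K ∧ j2 ∉ K ∧ v1 ≠ v2 ∧ j1 ≠ j2 ∧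
          G.Adj j1 v1 ∧ G.Adj j2 v2 := by
      by_contra hno
      obtain ⟨v1, hv1, hv10, -⟩ := third v0 v0
      obtain ⟨i, hi, hiv⟩ := hKI v1 hv1
      obtain ⟨v3, hv3, h13⟩ := hIK i1 hi1
      by_cases hii : i = i0
      · subst hii
        by_cases h30 : v3 = v0
        · subst h30
          exact hno ⟨v1, v3, i, i1, hv1, hv3, hi, hi1, hv10, hi10.symm, hiv, h13⟩
        · exact hno ⟨v3, v0, i1, i, hv3, hv0, hi1, hi, h30, hi10, h13, hiv0⟩
      · exact hno ⟨v1, v0, i, i0, hv1, hv0, hi, hi0, hv10, hii, hiv, hiv0⟩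
    -- the vertex cover
    have core : ∃ x y, x ∈ K ∧ y ∉ K ∧ (∀ i v, i ∉ K → v ∈ K → G.Adj i v → i = y ∨ v = x) := by
      obtain ⟨w0, hw0, hw01, hw02⟩ := third v1 v2
      obtain ⟨l0, hl0, hl01, hl02⟩ := thirdI j1 j2
      have gen : ∀ v1 v2 j1 j2, v1 ∈ K → v2 ∈ K → j1 ∉ K → j2 ∉ K → v1 ≠ v2 → j1 ≠ j2 →
          G.Adj j1 v1 → G.Adj j2 v2 → w0 ≠ v1 → w0 ≠ v2 → l0 ≠ j1 → l0 ≠ j2 → G.Adj j1 w0 →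
          (∀ i v, i ∉ K → v ∈ K → G.Adj i v → i = j1 ∨ v = v2) := by
        intro v1 v2 j1 j2 hv1 hv2 hj1 hj2 hv12 hj12 e1 e2 hw1 hw2 hl1 hl2 hjw
        have A : ∀ l, l ∉ K → l ≠ j1 → l ≠ j2 → ∀ v ∈ K, G.Adj l v → v = v2 := by
          intro l hl h1 h2 v hv hlv
          by_contra hne
          by_cases hvv : v = v1
          · subst hvv
            exact no3 w0 v v2 j1 l j2 hw0 hv hv2 hj1 hl hj2 hw1 hw2 hv12 h1.symm hj12 h2 hjw hlv e2
          · exact no3 v1 v v2 j1 l j2 hv1 hv hv2 hj1 hl hj2 (Ne.symm hvv) hv12 hne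
              h1.symm hj12 h2 e1 hlv e2
        have hlv2 : G.Adj l0 v2 := by
          obtain ⟨w, hw, hlw⟩ := hIK l0 hl0
          rwa [A l0 hl0 hl1 hl2 w hw hlw] at hlw
        intro i v hi hv hiv
        by_contra hcon
        push Not at hcon
        obtain ⟨hc1, hc2⟩ := hcon
        by_cases hij : i = j2
        · subst hij
          by_cases hvv : v = v1
          · subst hvv
            exact no3 w0 v v2 j1 i l0 hw0 hv hv2 hj1 hi hl0 hw1 hw2 hc2 hj12 hl1.symm
              hl2.symm hjw hiv hlv2
          · exact no3 v1 v v2 j1 i l0 hv1 hv hv2 hj1 hi hl0 (Ne.symm hvv) hv12 hc2 hj12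
              hl1.symm hl2.symm e1 hiv hlv2
        · exact hc2 (A i hi hc1 hij v hv hiv)
      obtain ⟨i, hi, hiw⟩ := hKI w0 hw0
      by_cases hi1' : i = j1
      · subst hi1'
        exact ⟨v2, i, hv2, hj1, gen v1 v2 i j2 hv1 hv2 hj1 hj2 hv12 hj12 e1 e2 hw01 hw02
          hl01 hl02 hiw⟩
      by_cases hi2' : i = j2
      · subst hi2'
        exact ⟨v1, i, hv1, hj2, gen v2 v1 i j1 hv2 hv1 hj2 hj1 hv12.symm hj12.symm e2 e1 hw02
          hw01 hl02 hl01 hiw⟩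
      exact (no3 v1 v2 w0 j1 j2 i hv1 hv2 hw0 hj1 hj2 hi hv12 hw01.symm hw02.symm hj12
        (Ne.symm hi1') (Ne.symm hi2') e1 e2 hiw).elim
    obtain ⟨x, y, hx, hy, hcov⟩ := core
    have hout : ∀ v, v ∉ K → v ≠ y → ∀ w, G.Adj v w → w = x := by
      intro v hv hvy w hw
      have hwK : w ∈ K := by by_contra h; exact hI _ _ hv h hw
      exact (hcov v w hv hwK hw).resolve_left hvy
    have hyK : ∀ v ∈ K, v ≠ x → G.Adj y v := by
      intro v hv hvx
      obtain ⟨i, hi, hiv⟩ := hKI v hv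
      rwa [(hcov i v hi hv hiv).resolve_right hvx] at hiv
    by_cases hxy : G.Adj y x
    · refine star x hx y hy ?_ hout
      intro v hv
      by_cases h : v = x
      · rw [h]; exact hxy
      · exact hyK v hv h
    · refine concl_two G n hn hn4 r p hr hp K hK' k hk x y hx hy (fun h => hxy h.symm)
        (fun v hv h => (hyK v hv h).symm) ?_ (fun w hw => hI y w hy hw) ?_
      · intro v hv hvy w
        refine ⟨hout v hv hvy w, ?_⟩
        rintro rfl
        obtain ⟨w', hw⟩ := hNoIso v
        rwa [hout v hv hvy w' hw] at hw
      · obtain ⟨c, h1, h2, -⟩ := thirdI y y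
        exact ⟨c, h1, h2⟩

theorem stmt_9 {V : Type*} [Fintype V] [DecidableEq V]
    (G : SimpleGraph V) [DecidableRel G.Adj]
    (n : ℕ) (hn : Fintype.card V = n) (hn4 : 4 ≤ n)
    (hNoIso : ∀ v : V, ∃ w : V, G.Adj v w)
    (r p : ℕ)
    (hr : r = (Finset.univ.filter fun v : V => G.degree v = 1).card)
    (hp : p = (Finset.univ.filter fun v : V => G.degree v = n - 1).card)
    (hEq : Equimatchable G) (hSplit : IsSplitGraph G) :
      p = n ∨
      (r = n - 1 ∧ p = 1) ∨
      (p = 1 ∧ 2 ≤ r ∧ Even (n - r) ∧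
        ∀ v : V, G.degree v = 1 ∨ G.degree v = n - r - 1 ∨ G.degree v = n - 1) ∨
      (p = 0 ∧ 2 ≤ r ∧ Even (n - r) ∧
        ∃ x y : V, x ≠ y ∧ ¬ G.Adj x y ∧
          G.degree x = n - 2 ∧ G.degree y = n - r - 2 ∧
          ∀ v : V, v ≠ x → v ≠ y → (G.degree v = 1 ∨ G.degree v = n - r - 1)) ∨
      (Odd n ∧ ∃ x y : V, x ≠ y ∧ G.degree x + G.degree y = p + n - 2 ∧
        ∀ v : V, v ≠ x → v ≠ y → (G.degree v = n - 1 ∨ G.degree v = n - 2)) := by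
  exact main_aux G n hn hn4 hNoIso r p hr hp hEq hSplit
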